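/- For all indices i, j ∈ {1,2,3} and every point (r,v) of phase space with A(r,v) ≠ 0, the Poisson bracket of a component of the LRL vector with a component of the LRL direction vector is {A_j, Θ_i}(r,v) = 2 E(r,v) ‖A(r,v)‖⁻¹ Σ_k ( (Σ_l ε_{jlk} Θ_l(r,v)) Θ_i(r,v) − ε_{jik} ) L_k(r,v). -/

import Mathlib

/-!
The bracket is reduced to brackets of the components of `A` alone. Since
`∇‖A‖ = ∑ l, Θ_l ∇A_l`, every partial gradient of `Θ_i` is
`‖A‖⁻¹ (∇A_i − Θ_i ∑ l, Θ_l ∇A_l)` (`hasGradientAt_normalize`), so that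
`{A_j, Θ_i} = ‖A‖⁻¹ ({A_j, A_i} − Θ_i ∑ l, Θ_l {A_j, A_l})`.
The classical relation `{A_j, A_l} = −2E ∑ k, ε_{jlk} L_k` (`bracket_lrl`) then gives the result. It
is checked in coordinates from the expansion
`A_j = r_j (‖v‖² − κ/‖r‖) − v_j (r · v)`, whose gradients are `lrlGradR` and `lrlGradV`.
-/

noncomputable section

/-- Physical 3-space. -/
abbrev E3 : Type := EuclideanSpace ℝ (Fin 3)

/-- Build a vector in `E3` from its components. -/
def toE3 (f : Fin 3 → ℝ) : E3 := (EuclideanSpace.equiv (Fin 3) ℝ).symm f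

/-- Cross product in `ℝ³`. -/
def cross (a b : E3) : E3 :=
  toE3 ![a 1 * b 2 - a 2 * b 1, a 2 * b 0 - a 0 * b 2, a 0 * b 1 - a 1 * b 0]

/-- Dot product in `ℝ³`. -/
def dot (a b : E3) : ℝ := ∑ i, a i * b i

/-- Gradient in the `r` variable of a function on phase space. -/
def gradR (F : E3 × E3 → ℝ) (p : E3 × E3) : E3 := gradient (fun x => F (x, p.2)) p.1

/-- Gradient in the `v` variable of a function on phase space. -/
def gradV (F : E3 × E3 → ℝ) (p : E3 × E3) : E3 := gradient (fun y => F (p.1, y)) p.2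

/-- Poisson bracket of two functions on phase space. -/
def pb (F G : E3 × E3 → ℝ) (p : E3 × E3) : ℝ :=
  dot (gradR F p) (gradV G p) - dot (gradR G p) (gradV F p)

/-- Energy `E(r,v) = (1/2)‖v‖² − κ/‖r‖`. -/
def energy (κ : ℝ) (p : E3 × E3) : ℝ := (1/2) * ‖p.2‖^2 - κ / ‖p.1‖

/-- Angular momentum `L(r,v) = r × v`. -/
def angMom (p : E3 × E3) : E3 := cross p.1 p.2

/-- Laplace–Runge–Lenz vector `A(r,v) = v × L − κ r/‖r‖`. -/
def lrl (κ : ℝ) (p : E3 × E3) : E3 := cross p.2 (angMom p) - (κ / ‖p.1‖) • p.1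

/-- LRL direction vector `Θ = A/‖A‖`. -/
def lrlDir (κ : ℝ) (p : E3 × E3) : E3 := ‖lrl κ p‖⁻¹ • lrl κ p

/-- Levi-Civita symbol `ε_{ijk}` on indices in `{0,1,2}`. -/
def eps (i j k : Fin 3) : ℝ :=
  (((j : ℕ) : ℝ) - ((i : ℕ) : ℝ)) * (((k : ℕ) : ℝ) - ((i : ℕ) : ℝ))
    * (((k : ℕ) : ℝ) - ((j : ℕ) : ℝ)) / 2

/-- The gradient of `A_j` in the `r` variable:
`∂A_j/∂r_m = δ_{jm} (‖v‖² − κ/‖r‖) + κ r_j r_m / ‖r‖³ − v_j v_m`. -/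
def lrlGradR (κ : ℝ) (r v : E3) (j : Fin 3) : E3 :=
  toE3 fun m => (if j = m then ‖v‖ ^ 2 - κ / ‖r‖ else 0) + κ / ‖r‖ ^ 3 * r j * r m - v j * v m

/-- The gradient of `A_j` in the `v` variable:
`∂A_j/∂v_m = 2 r_j v_m − δ_{jm} (r · v) − v_j r_m`. -/
def lrlGradV (r v : E3) (j : Fin 3) : E3 :=
  toE3 fun m => 2 * r j * v m - (if j = m then dot r v else 0) - v j * r m

lemma toE3_apply (f : Fin 3 → ℝ) (m : Fin 3) : toE3 f m = f m := rfl

lemma norm_sq_E3 (x : E3) : ‖x‖ ^ 2 = x 0 ^ 2 + x 1 ^ 2 + x 2 ^ 2 := by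
  rw [EuclideanSpace.norm_sq_eq]
  simp [Fin.sum_univ_three]

lemma lrl_apply (κ : ℝ) (r v : E3) (j : Fin 3) :
    lrl κ (r, v) j = r j * (‖v‖ ^ 2 - κ * ‖r‖⁻¹) - v j * dot r v := by
  rw [norm_sq_E3]
  fin_cases j <;>
    simp [lrl, angMom, cross, toE3_apply, dot, Fin.sum_univ_three] <;> ring

lemma hasGradientAt_toE3 {f : E3 → ℝ} {f' : E3 →L[ℝ] ℝ} {x : E3} {g : Fin 3 → ℝ}
    (hf : HasFDerivAt f f' x) (h : ∀ y : E3, f' y = ∑ m, g m * y m) :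
    HasGradientAt f (toE3 g) x := by
  rw [hasGradientAt_iff_hasFDerivAt]
  refine hf.congr_fderiv (ContinuousLinearMap.ext fun y => ?_)
  rw [h, InnerProductSpace.toDual_apply_apply, PiLp.inner_apply]
  simp [toE3_apply, mul_comm]

lemma hasFDerivAt_coord (x : E3) (m : Fin 3) :
    HasFDerivAt (fun y : E3 => y m) (EuclideanSpace.proj m : E3 →L[ℝ] ℝ) x :=
  (EuclideanSpace.proj m : E3 →L[ℝ] ℝ).hasFDerivAt

lemma hasFDerivAt_norm_inv {x : E3} (hx : x ≠ 0) :
    HasFDerivAt (fun y : E3 => ‖y‖⁻¹) (-(‖x‖ ^ 3)⁻¹ • innerSL ℝ x) x := by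
  have hx' : ‖x‖ ≠ 0 := norm_ne_zero_iff.2 hx
  have h := ((hasStrictFDerivAt_norm_sq x).hasFDerivAt.sqrt (pow_ne_zero 2 hx'))
  simp only [Real.sqrt_sq (norm_nonneg _)] at h
  refine ((hasDerivAt_inv hx').comp_hasFDerivAt x h).congr_fderiv
    (ContinuousLinearMap.ext fun y => ?_)
  simp
  field_simp

lemma hasGradientAt_lrl_r (κ : ℝ) (r v : E3) (hr : r ≠ 0) (j : Fin 3) :
    HasGradientAt (fun x => lrl κ (x, v) j) (lrlGradR κ r v j) r := by
  simp only [lrl_apply, dot, Fin.sum_univ_three]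
  have h := ((hasFDerivAt_coord r j).mul
      (((hasFDerivAt_norm_inv hr).const_mul κ).const_sub (‖v‖ ^ 2))).sub
    (((((hasFDerivAt_coord r 0).mul_const (v 0)).add
      ((hasFDerivAt_coord r 1).mul_const (v 1))).add
      ((hasFDerivAt_coord r 2).mul_const (v 2))).const_mul (v j))
  refine hasGradientAt_toE3 h fun y => ?_
  fin_cases j <;>
    simp [Fin.sum_univ_three, PiLp.inner_apply] <;> ring

lemma hasGradientAt_lrl_v (κ : ℝ) (r v : E3) (j : Fin 3) :
    HasGradientAt (fun y => lrl κ (r, y) j) (lrlGradV r v j) v := by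
  simp only [lrl_apply, dot, Fin.sum_univ_three]
  have h := (((hasStrictFDerivAt_norm_sq v).hasFDerivAt.sub_const (κ * ‖r‖⁻¹)).const_mul (r j)).sub
    ((hasFDerivAt_coord v j).mul
    ((((hasFDerivAt_coord v 0).const_mul (r 0)).add
      ((hasFDerivAt_coord v 1).const_mul (r 1))).add
      ((hasFDerivAt_coord v 2).const_mul (r 2))))
  refine hasGradientAt_toE3 h fun y => ?_
  fin_cases j <;>
    simp [Fin.sum_univ_three, PiLp.inner_apply, dot] <;> ring

/-- The gradient of a component of the normalization `A/‖A‖` of a vector field `A`, in terms of the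
gradients `g l` of the components of `A`. -/
lemma hasGradientAt_normalize {A : E3 → E3} {g : Fin 3 → E3} {x : E3}
    (hA : ∀ l, HasGradientAt (fun y => A y l) (g l) x) (hx : A x ≠ 0) (i : Fin 3) :
    HasGradientAt (fun y => (‖A y‖⁻¹ • A y) i)
      (toE3 fun m => ‖A x‖⁻¹ * (g i m
        - (‖A x‖⁻¹ • A x) i * ∑ l, (‖A x‖⁻¹ • A x) l * g l m)) x := by
  have hF : HasFDerivAt A ((EuclideanSpace.equiv (Fin 3) ℝ).symm.toContinuousLinearMap.comp
      (ContinuousLinearMap.pi fun l => InnerProductSpace.toDual ℝ E3 (g l))) x := by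
    rw [← hasFDerivWithinAt_univ, hasFDerivWithinAt_euclidean]
    exact fun l => (hA l).hasFDerivAt.hasFDerivWithinAt
  have h := ((hasFDerivAt_norm_inv hx).comp x hF).mul (hA i).hasFDerivAt
  have hn : ‖A x‖ ≠ 0 := norm_ne_zero_iff.2 hx
  refine hasGradientAt_toE3 h fun y => ?_
  simp [Fin.sum_univ_three, PiLp.inner_apply]
  field_simp
  ring

/-- `{A_j, A_l} = −2E ∑ k, ε_{jlk} L_k`, written out with the explicit gradients. -/
lemma bracket_lrl (κ : ℝ) (r v : E3) (hr : r ≠ 0) (j l : Fin 3) :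
    dot (lrlGradR κ r v j) (lrlGradV r v l) - dot (lrlGradR κ r v l) (lrlGradV r v j)
      = -2 * energy κ (r, v) * ∑ k, eps j l k * angMom (r, v) k := by
  have hn : ‖r‖ ≠ 0 := norm_ne_zero_iff.2 hr
  -- `hb` is the only relation linking `κ/‖r‖³` and `κ/‖r‖` to the coordinates of `r`; with both
  -- abstracted to variables the claim is a polynomial identity.
  have hb : κ / ‖r‖ ^ 3 * (r 0 ^ 2 + r 1 ^ 2 + r 2 ^ 2) = κ / ‖r‖ := by
    rw [← norm_sq_E3]
    field_simp
  simp only [energy, lrlGradR, lrlGradV, norm_sq_E3 v]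
  generalize κ / ‖r‖ ^ 3 = b at *
  generalize κ / ‖r‖ = c at *
  fin_cases j <;> fin_cases l <;>
    simp [dot, toE3_apply, Fin.sum_univ_three, eps, angMom, cross] <;> subst hb <;> ring

/-- The Poisson bracket of a component of the LRL vector with a component of the
LRL direction vector:
`{A_j, Θ_i} = 2E‖A‖⁻¹ Σ_k ((Σ_l ε_{jlk} Θ_l) Θ_i − ε_{jik}) L_k` where `A ≠ 0`. -/
theorem poisson_lrl_lrlDir (κ : ℝ) (hκ : 0 < κ) (i j : Fin 3)
    (r v : E3) (hr : r ≠ 0) (hA : lrl κ (r, v) ≠ 0) :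
    pb (fun p => lrl κ p j) (fun p => lrlDir κ p i) (r, v)
      = 2 * energy κ (r, v) * ‖lrl κ (r, v)‖⁻¹
          * ∑ k, ((∑ l, eps j l k * lrlDir κ (r, v) l) * lrlDir κ (r, v) i
                    - eps j i k) * angMom (r, v) k := by
  have hR := hasGradientAt_normalize (fun l => hasGradientAt_lrl_r κ r v hr l) hA i
  have hV := hasGradientAt_normalize (fun l => hasGradientAt_lrl_v κ r v l) hA i
  have hb := bracket_lrl κ r v hr j
  have hbi := hb i
  have hb0 := hb 0
  have hb1 := hb 1
  have hb2 := hb 2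
  simp only [pb, gradR, gradV, lrlDir]
  rw [hR.gradient, hV.gradient, (hasGradientAt_lrl_r κ r v hr j).gradient,
    (hasGradientAt_lrl_v κ r v j).gradient]
  generalize (‖lrl κ (r, v)‖⁻¹ • lrl κ (r, v)) = Θ
  generalize ‖lrl κ (r, v)‖⁻¹ = n
  generalize lrlGradR κ r v = gR at *
  generalize lrlGradV r v = gV at *
  simp only [dot, toE3_apply, Fin.sum_univ_three] at *
  linear_combination n * hbi - n * Θ i * (Θ 0 * hb0 + Θ 1 * hb1 + Θ 2 * hb2)
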